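/- With θ = 0.8234, for every n ≥ 1, every w ∈ W, every x ∈ [0,1], and every e ∈ {−1,1} one has |F_n^w(x,e) − F(x,e)| ≤ θ^n. -/

import Mathlib

open Real MeasureTheory Filter Set
open scoped ENNReal NNReal Classical

namespace OCF

/-- The golden ratio `G = (1+√5)/2`. -/
noncomputable def G : ℝ := (1 + Real.sqrt 5) / 2

/-- `g = (√5-1)/2`. -/
noncomputable def gg : ℝ := (Real.sqrt 5 - 1) / 2

/-- The map `u : W × X → W` of the RSCC; `uF w e i = u(w,(e,i))`. -/
noncomputable def uF (w : ℝ) (e i : ℤ) : ℝ :=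
  if e = 1 then 1 / (i + w)
  else if w < gg ^ 2 then 1 / (i - w) else 1 / (i - gg ^ 2)

/-- The probabilities `P : W × X → [0,∞)` of the RSCC; `PF w e i = P(w,(e,i))`. -/
noncomputable def PF (w : ℝ) (e i : ℤ) : ℝ :=
  if w < gg ^ 2 then
    (1 - w ^ 2) * (2 - (if i = 1 then 1 else 0)) /
      (2 * ((i : ℝ) - 1 + (if i = 1 then 1 else 0) + (e : ℝ) * w) * ((i : ℝ) + 1 + (e : ℝ) * w))
  else
    (1 + w) * (2 - (if i = 1 then 1 else 0)) * (if e = 1 then 1 else 0) /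
      (((i : ℝ) - 1 + (if i = 1 then 1 else 0) + w) * ((i : ℝ) + 1 + w))

/-- The transition probability function
`Q(w,B) = Σ_{(e,i) ∈ X : u(w,(e,i)) ∈ B} P(w,(e,i))`, where odd `i` is written as `2m+1`. -/
noncomputable def Qf (w : ℝ) (B : Set ℝ) : ℝ :=
  ∑' m : ℕ, ((if uF w 1 (2 * (m : ℤ) + 1) ∈ B then PF w 1 (2 * (m : ℤ) + 1) else 0)
           + (if uF w (-1) (2 * (m : ℤ) + 1) ∈ B then PF w (-1) (2 * (m : ℤ) + 1) else 0))

/-- The stationary probability measure `Q∞` on `W = [0,G]`. -/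
noncomputable def Qinf : Measure ℝ :=
  (volume.restrict (Set.Icc (0 : ℝ) G)).withDensity
    (fun w => ENNReal.ofReal ((3 * Real.log G)⁻¹ *
      (if w < gg ^ 2 then 1 / (1 + w) + 1 / (1 - w) else 1 / (1 + w))))

/-- The transition operator `U` of the Markov chain: `Uf(w) = Σ_{(e,i)} P(w,(e,i)) f(u(w,(e,i)))`. -/
noncomputable def U (f : ℝ → ℂ) : ℝ → ℂ := fun w =>
  ∑' m : ℕ, ((PF w 1 (2 * (m : ℤ) + 1) : ℂ) * f (uF w 1 (2 * (m : ℤ) + 1))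
           + (PF w (-1) (2 * (m : ℤ) + 1) : ℂ) * f (uF w (-1) (2 * (m : ℤ) + 1)))

/-- The `n`-step transition probability, as a measure-valued kernel: `Qiter 1 w = Q(w,·)` and
`Qiter (n+1) w B = ∫_W Qiter n w' B Q(w,dw')` (the transition measure `Q(w,·)` being purely
atomic with atom `u(w,(e,i))` of mass `P(w,(e,i))`). -/
noncomputable def Qiter : ℕ → ℝ → Measure ℝ
  | 0 => fun w => Measure.dirac w
  | n + 1 => fun w => Measure.sum (fun m : ℕ =>
      ENNReal.ofReal (PF w 1 (2 * (m : ℤ) + 1)) • Qiter n (uF w 1 (2 * (m : ℤ) + 1)) +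
      ENNReal.ofReal (PF w (-1) (2 * (m : ℤ) + 1)) • Qiter n (uF w (-1) (2 * (m : ℤ) + 1)))

end OCF

open OCF

namespace OCF

/-- The kernels `K_e(x,y)`, `e = ±1`. -/
noncomputable def K (e : ℤ) (x y : ℝ) : ℝ :=
  if e = 1 then
    (if y < gg ^ 2 then (1 - y ^ 2) * x / (2 * (1 + x * y)) else (1 + y) * x / (1 + x * y))
  else
    (if y < gg ^ 2 then (1 - y ^ 2) * x / (2 * (1 - x * y)) else 0)

end OCF

/-!
A state `w < g²` of the chain is split into the two signed states `w` and `-w`, taken with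
probabilities `(1 - w) / 2` and `(1 + w) / 2`. From a signed state `v ∈ (-g², G]` the chain moves to
`1 / (2 m + 1 + v)` with probability `branchWeight m v`, so a single family of maps describes every
step. The branch `m = 0` lands in `W₂` and all the others land in `W₁`; estimating the weights and
the branches separately shows that the transition operator improves Lipschitz bounds on `W₁` and on
`W₂`, together with a bound on the jump between them, by the factor `0.8234`. The kernels
`K_e(x, ·)` satisfy these bounds with constant `1`, hence `w ↦ Fₙʷ(x, e)` has oscillation at most
`0.8234 ^ n`.

The measure with density proportional to `1 / (1 + v)` on `(-g², G)` folds to `Q∞` under `|·|`, and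
the branches carry it to `Q∞`; so `Q∞` is invariant and `F(x, e)` is the `Q∞`-average of
`Fₙʷ(x, e)` over `w`, which lies within the oscillation of each of its values.
-/

namespace OCF

lemma gg_sq_eq : gg ^ 2 = (3 - √5) / 2 := by
  have h5 : √5 ^ 2 = 5 := Real.sq_sqrt (by norm_num)
  unfold gg
  linear_combination h5 / 4

lemma gg_sq_mem_Ioo : gg ^ 2 ∈ Ioo (0.3819 : ℝ) 0.382 := by
  have lower : 2.236 < √5 := Real.lt_sqrt_of_sq_lt (by norm_num)
  have upper : √5 < 2.2362 := (Real.sqrt_lt' (by norm_num)).2 (by norm_num)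
  rw [gg_sq_eq]
  constructor <;> linarith

lemma G_eq_two_sub : G = 2 - gg ^ 2 := by
  rw [gg_sq_eq, G]
  ring

lemma G_mul_one_sub_gg_sq : G * (1 - gg ^ 2) = 1 := by
  have h5 : √5 ^ 2 = 5 := Real.sq_sqrt (by norm_num)
  rw [gg_sq_eq, G]
  linear_combination h5 / 4

lemma gg_sq_mul_one_add_G : gg ^ 2 * (1 + G) = 1 := by
  linear_combination G_eq_two_sub - G_mul_one_sub_gg_sq

lemma G_mem_Ioo : G ∈ Ioo (1.618 : ℝ) 1.6181 := by
  obtain ⟨lower, upper⟩ := gg_sq_mem_Ioo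
  rw [G_eq_two_sub]
  constructor <;> linarith

lemma one_div_mem_Icc_gg_sq_G {t : ℝ} (ht : t ∈ Icc (1 - gg ^ 2) (1 + G)) :
    1 / t ∈ Icc (gg ^ 2) G := by
  have ht0 : 0 < t := by linarith [ht.1, gg_sq_mem_Ioo.2]
  rw [mem_Icc, le_div_iff₀ ht0, div_le_iff₀ ht0]
  constructor
  · calc gg ^ 2 * t ≤ gg ^ 2 * (1 + G) := by gcongr; exact ht.2
      _ = 1 := gg_sq_mul_one_add_G
  · calc 1 = G * (1 - gg ^ 2) := G_mul_one_sub_gg_sq.symm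
      _ ≤ G * t := mul_le_mul_of_nonneg_left ht.1 (by linarith [G_mem_Ioo.1])

lemma one_div_mem_Ioo_zero_gg_sq {t : ℝ} (ht : 1 + G < t) : 1 / t ∈ Ioo 0 (gg ^ 2) := by
  have ht0 : 0 < t := by linarith [G_mem_Ioo.1]
  refine ⟨one_div_pos.2 ht0, (div_lt_iff₀ ht0).2 ?_⟩
  calc 1 = gg ^ 2 * (1 + G) := gg_sq_mul_one_add_G.symm
    _ < gg ^ 2 * t := mul_lt_mul_of_pos_left ht (by linarith [gg_sq_mem_Ioo.1])

lemma hasSum_sub_succ_of_antitone {a : ℕ → ℝ} (ha : Antitone a)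
    (h0 : Tendsto a atTop (nhds 0)) : HasSum (fun k ↦ a k - a (k + 1)) (a 0) := by
  rw [hasSum_iff_tendsto_nat_of_nonneg (fun k ↦ sub_nonneg.2 (ha k.le_succ))]
  simpa only [Finset.sum_range_sub', sub_zero] using h0.const_sub (a 0)

lemma hasSum_one_div_mul_mul :
    HasSum (fun k : ℕ ↦ 1 / (((k : ℝ) + 1) * (k + 2) * (k + 3))) (1 / 4) := by
  have anti : Antitone fun k : ℕ ↦ 1 / (2 * ((k : ℝ) + 1) * (k + 2)) := by
    intro m n hmn
    have : (m : ℝ) ≤ n := by exact_mod_cast hmn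
    dsimp only
    gcongr
  have lim : Tendsto (fun k : ℕ ↦ 1 / (2 * ((k : ℝ) + 1) * (k + 2))) atTop (nhds 0) := by
    refine squeeze_zero (fun k ↦ by positivity) (fun k ↦ ?_)
      tendsto_one_div_add_atTop_nhds_zero_nat
    gcongr
    nlinarith [(k.cast_nonneg : (0 : ℝ) ≤ k)]
  convert hasSum_sub_succ_of_antitone anti lim using 1
  · ext k
    push_cast
    field_simp
    ring
  · norm_num

/-- The probability that the digit following the signed state `v ∈ (-g², G]` is `2 m + 1`. A state
`w ∈ W` of the chain stands for the signed states `w` and, if `w < g²`, also `-w`. -/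
noncomputable def branchWeight : ℕ → ℝ → ℝ
  | 0, v => 1 / (2 + v)
  | m + 1, v => 2 * (1 + v) / ((2 * m + 2 + v) * (2 * m + 4 + v))

lemma branchWeight_nonneg (m : ℕ) {v : ℝ} (hv : -1 < v) : 0 ≤ branchWeight m v := by
  have : 0 < 1 + v := by linarith
  have (x : ℝ) (hx : 1 ≤ x) : 0 < x + v := by linarith
  cases m with
  | zero => exact one_div_nonneg.2 (by linarith)
  | succ k =>
    have h2 : 0 < 2 * (k : ℝ) + 2 + v := this _ (by linarith [(k.cast_nonneg : (0 : ℝ) ≤ k)])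
    have h4 : 0 < 2 * (k : ℝ) + 4 + v := by linarith
    unfold branchWeight
    positivity

lemma hasSum_branchWeight {v : ℝ} (hv : -1 < v) : HasSum (branchWeight · v) 1 := by
  have hpos (k : ℕ) : 0 < 2 * (k : ℝ) + 2 + v := by linarith [(k.cast_nonneg : (0 : ℝ) ≤ k)]
  have anti : Antitone fun k : ℕ ↦ (1 + v) / (2 * k + 2 + v) := by
    intro m n hmn
    have : (m : ℝ) ≤ n := by exact_mod_cast hmn
    exact div_le_div_of_nonneg_left (by linarith) (hpos m) (by linarith)
  have lim : Tendsto (fun k : ℕ ↦ (1 + v) / (2 * k + 2 + v)) atTop (nhds 0) := by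
    refine tendsto_const_nhds.div_atTop ?_
    simp_rw [add_assoc]
    exact tendsto_atTop_add_const_right _ _
      (tendsto_natCast_atTop_atTop.const_mul_atTop two_pos)
  have tail : HasSum (fun k ↦ branchWeight (k + 1) v) ((1 + v) / (2 + v)) := by
    convert hasSum_sub_succ_of_antitone anti lim using 1
    · ext k
      have h2 := (hpos k).ne'
      have h4 : 2 * (k : ℝ) + 4 + v ≠ 0 := by linarith [hpos k]
      rw [branchWeight, Nat.cast_succ, show 2 * ((k : ℝ) + 1) + 2 + v = 2 * k + 4 + v by ring,
        div_sub_div _ _ h2 h4]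
      congr 1
      ring
    · norm_num
  have head : branchWeight 0 v + (1 + v) / (2 + v) = 1 := by
    have h2 : 2 + v ≠ 0 := by linarith
    rw [branchWeight]
    field_simp
    ring
  exact head ▸ tail.zero_add

/-- The mean of `f` over the successors `1 / (2 m + 1 + v)` of the signed state `v`. -/
noncomputable def branchMean (f : ℝ → ℝ) (v : ℝ) : ℝ :=
  ∑' m : ℕ, branchWeight m v * f (1 / (2 * m + 1 + v))

/-- The functions whose oscillation the chain contracts: Lipschitz on `W₁` and on `W₂`, with a
controlled distance between their values on `W₂` and at `0`. The weights `1.18`, `0.3`, `0.549` are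
tuned so that one step of the chain gains the factor `0.8234`, while `c` still bounds the
oscillation of `f` on `W`. -/
structure OscBound (f : ℝ → ℝ) (c : ℝ) : Prop where
  left : ∀ y ∈ Ico 0 (gg ^ 2), ∀ y' ∈ Ico 0 (gg ^ 2), |f y - f y'| ≤ c * 1.18 * |y - y'|
  right : ∀ y ∈ Icc (gg ^ 2) G, ∀ y' ∈ Icc (gg ^ 2) G, |f y - f y'| ≤ c * 0.3 * |y - y'|
  jump : ∀ y ∈ Icc (gg ^ 2) G, |f y - f 0| ≤ c * 0.549

namespace OscBound

variable {f : ℝ → ℝ} {c : ℝ}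

lemma nonneg (hf : OscBound f c) : 0 ≤ c := by
  have := (abs_nonneg _).trans (hf.jump G ⟨by linarith [gg_sq_mem_Ioo.2, G_mem_Ioo.1], le_rfl⟩)
  linarith

lemma abs_sub_zero_le (hf : OscBound f c) {y : ℝ} (hy : y ∈ Ico 0 (gg ^ 2)) :
    |f y - f 0| ≤ c * 1.18 * y := by
  have := hf.left y hy 0 ⟨le_rfl, hy.1.trans_lt hy.2⟩
  rwa [sub_zero, abs_of_nonneg hy.1] at this

lemma abs_sub_le (hf : OscBound f c) {y y' : ℝ} (hy : y ∈ Icc 0 G) (hy' : y' ∈ Icc 0 G) :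
    |f y - f y'| ≤ c := by
  have hc := hf.nonneg
  obtain ⟨-, hg⟩ := gg_sq_mem_Ioo
  have cross {a b : ℝ} (ha : a ∈ Ico 0 (gg ^ 2)) (hb : b ∈ Icc (gg ^ 2) G) : |f a - f b| ≤ c := by
    have hfa := hf.abs_sub_zero_le ha
    have hfb := hf.jump b hb
    have hca : c * a ≤ c * 0.382 := by gcongr; linarith [ha.2]
    linarith [_root_.abs_sub_le (f a) (f 0) (f b), abs_sub_comm (f 0) (f b)]
  rcases lt_or_ge y (gg ^ 2) with hyg | hyg <;> rcases lt_or_ge y' (gg ^ 2) with hyg' | hyg'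
  · have hd : |y - y'| ≤ 0.382 := abs_sub_le_iff.2 ⟨by linarith [hy'.1], by linarith [hy.1]⟩
    nlinarith [hf.left y ⟨hy.1, hyg⟩ y' ⟨hy'.1, hyg'⟩]
  · exact cross ⟨hy.1, hyg⟩ ⟨hyg', hy'.2⟩
  · exact abs_sub_comm (f y') (f y) ▸ cross ⟨hy'.1, hyg'⟩ ⟨hyg, hy.2⟩
  · have hG := G_mem_Ioo.2
    have hd : |y - y'| ≤ 1.6181 :=
      abs_sub_le_iff.2 ⟨by linarith [hy'.1, hy.2], by linarith [hy.1, hy'.2]⟩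
    nlinarith [hf.right y ⟨hyg, hy.2⟩ y' ⟨hyg', hy'.2⟩]

lemma abs_le (hf : OscBound f c) : ∀ y ∈ Icc 0 G, |f y| ≤ c + |f 0| := fun y hy ↦ by
  have := hf.abs_sub_le hy ⟨le_rfl, hy.1.trans hy.2⟩
  linarith [abs_sub_abs_le_abs_sub (f y) (f 0)]

end OscBound

lemma one_div_branch_zero_mem {v : ℝ} (hv : v ∈ Ioc (-gg ^ 2) G) :
    1 / (1 + v) ∈ Icc (gg ^ 2) G :=
  one_div_mem_Icc_gg_sq_G ⟨by linarith [hv.1], by linarith [hv.2]⟩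

lemma one_div_branch_succ_mem {v : ℝ} (hv : v ∈ Ioc (-gg ^ 2) G) (k : ℕ) :
    1 / (2 * k + 3 + v) ∈ Ioo 0 (gg ^ 2) :=
  one_div_mem_Ioo_zero_gg_sq
    (by linarith [hv.1, G_eq_two_sub, (k.cast_nonneg : (0 : ℝ) ≤ k)])

lemma one_div_branch_mem {v : ℝ} (hv : v ∈ Ioc (-gg ^ 2) G) (m : ℕ) :
    1 / (2 * m + 1 + v) ∈ Icc 0 G := by
  cases m with
  | zero =>
    have := one_div_branch_zero_mem hv
    simp only [Nat.cast_zero, mul_zero, zero_add]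
    exact ⟨by linarith [this.1, gg_sq_mem_Ioo.1], this.2⟩
  | succ k =>
    have := one_div_branch_succ_mem hv k
    rw [show 2 * ((k + 1 : ℕ) : ℝ) + 1 + v = 2 * k + 3 + v by push_cast; ring]
    exact ⟨this.1.le, by linarith [this.2, gg_sq_mem_Ioo.2, G_mem_Ioo.1]⟩

lemma neg_one_lt_of_mem {v : ℝ} (hv : v ∈ Ioc (-gg ^ 2) G) : -1 < v := by
  linarith [hv.1, gg_sq_mem_Ioo.2]

lemma summable_branchWeight_mul {h : ℝ → ℝ} {M v : ℝ} (hM : ∀ y ∈ Icc 0 G, |h y| ≤ M)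
    (hv : v ∈ Ioc (-gg ^ 2) G) :
    Summable fun m : ℕ ↦ branchWeight m v * h (1 / (2 * m + 1 + v)) := by
  have hv1 := neg_one_lt_of_mem hv
  refine Summable.of_norm_bounded ((hasSum_branchWeight hv1).summable.mul_right M) fun m ↦ ?_
  rw [norm_mul, Real.norm_of_nonneg (branchWeight_nonneg m hv1), Real.norm_eq_abs]
  exact mul_le_mul_of_nonneg_left (hM _ (one_div_branch_mem hv m)) (branchWeight_nonneg m hv1)

section Lipschitz

variable {f : ℝ → ℝ} {c a κ v v' : ℝ}

lemma abs_mul_sub_mul_le {p p' h h' : ℝ} (hp' : 0 ≤ p') :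
    |p * h - p' * h'| ≤ |p - p'| * |h| + p' * |h - h'| :=
  calc |p * h - p' * h'| = |(p - p') * h + p' * (h - h')| := by ring_nf
    _ ≤ |(p - p') * h| + |p' * (h - h')| := abs_add_le _ _
    _ = |p - p'| * |h| + p' * |h - h'| := by rw [abs_mul, abs_mul, abs_of_nonneg hp']

lemma abs_one_div_sub_one_div {z z' : ℝ} (hz : 0 < z) (hz' : 0 < z') :
    |1 / z - 1 / z'| = |z - z'| / (z * z') := by
  rw [div_sub_div _ _ hz.ne' hz'.ne', abs_div, abs_of_pos (mul_pos hz hz'), one_mul, mul_one,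
    abs_sub_comm]

lemma OscBound.abs_head_sub_le (hf : OscBound f c) (ha : 0 < a) (hv : v ∈ Ioc (-gg ^ 2) G)
    (hv' : v' ∈ Ioc (-gg ^ 2) G) (hav : a ≤ 1 + v) (hav' : a ≤ 1 + v') :
    |branchWeight 0 v * (f (1 / (1 + v)) - f 0) - branchWeight 0 v' * (f (1 / (1 + v')) - f 0)| ≤
      c * (0.3 / ((1 + a) * a ^ 2) + 0.549 / (1 + a) ^ 2) * |v - v'| := by
  have hc := hf.nonneg
  have hs : 0 < 1 + v := ha.trans_le hav
  have hs' : 0 < 1 + v' := ha.trans_le hav'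
  have hj := hf.jump _ (one_div_branch_zero_mem hv)
  have hr : |f (1 / (1 + v)) - f (1 / (1 + v'))| ≤ c * 0.3 * (|v - v'| / a ^ 2) :=
    calc _ ≤ c * 0.3 * |1 / (1 + v) - 1 / (1 + v')| :=
          hf.right _ (one_div_branch_zero_mem hv) _ (one_div_branch_zero_mem hv')
      _ = c * 0.3 * (|v - v'| / ((1 + v) * (1 + v'))) := by
          rw [abs_one_div_sub_one_div hs hs', add_sub_add_left_eq_sub]
      _ ≤ c * 0.3 * (|v - v'| / a ^ 2) := by rw [pow_two]; gcongr
  have hw : |branchWeight 0 v - branchWeight 0 v'| ≤ |v - v'| / (1 + a) ^ 2 := by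
    rw [branchWeight, branchWeight, abs_one_div_sub_one_div (by linarith) (by linarith),
      add_sub_add_left_eq_sub]
    exact div_le_div_of_nonneg_left (abs_nonneg _) (by positivity) (by nlinarith)
  have hw' : branchWeight 0 v' ≤ 1 / (1 + a) :=
    one_div_le_one_div_of_le (by linarith) (by linarith)
  calc _ ≤ |branchWeight 0 v - branchWeight 0 v'| * |f (1 / (1 + v)) - f 0| +
        branchWeight 0 v' * |f (1 / (1 + v)) - f 0 - (f (1 / (1 + v')) - f 0)| :=
        abs_mul_sub_mul_le (branchWeight_nonneg 0 (by linarith))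
    _ ≤ |v - v'| / (1 + a) ^ 2 * (c * 0.549) + 1 / (1 + a) * (c * 0.3 * (|v - v'| / a ^ 2)) := by
        rw [sub_sub_sub_cancel_right]
        gcongr
    _ = c * (0.3 / ((1 + a) * a ^ 2) + 0.549 / (1 + a) ^ 2) * |v - v'| := by
        field_simp
        ring

lemma branchWeight_succ_eq (k : ℕ) (v : ℝ) :
    branchWeight (k + 1) v = 2 * (1 + v) / ((2 * k + 3 + v) ^ 2 - 1) := by
  rw [branchWeight]
  ring_nf

/-- The bound on the `k`-th summand of the tail of the Lipschitz constant of `branchMean`, cleared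
of denominators; here `s = 1 + v` and `s' = 1 + v'`. -/
def TailBound (κ s s' : ℝ) : Prop :=
  ∀ k : ℕ, (k + 1) * (k + 2) * (k + 3) *
      (2 * |(2 * k + 2) ^ 2 - 1 - s * s'| * (2 * k + 2 + s') +
        2 * s' * ((2 * k + 2 + s) ^ 2 - 1)) ≤
    κ * ((2 * k + 2 + s) * (2 * k + 2 + s') * ((2 * k + 2 + s) ^ 2 - 1) *
      ((2 * k + 2 + s') ^ 2 - 1))

lemma abs_branchWeight_succ_sub (k : ℕ) (hv : -1 < v) (hv' : -1 < v') :
    |branchWeight (k + 1) v - branchWeight (k + 1) v'| =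
      2 * |(2 * k + 2) ^ 2 - 1 - (1 + v) * (1 + v')| * |v - v'| /
        (((2 * k + 3 + v) ^ 2 - 1) * ((2 * k + 3 + v') ^ 2 - 1)) := by
  have : (0 : ℝ) ≤ k := k.cast_nonneg
  have hD : 0 < (2 * k + 3 + v) ^ 2 - 1 := by nlinarith
  have hD' : 0 < (2 * k + 3 + v') ^ 2 - 1 := by nlinarith
  rw [branchWeight_succ_eq, branchWeight_succ_eq, div_sub_div _ _ hD.ne' hD'.ne', abs_div,
    abs_of_pos (mul_pos hD hD'), ← abs_two, ← abs_mul, ← abs_mul, abs_two]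
  congr 2
  ring

lemma OscBound.abs_tail_sub_le (hf : OscBound f c) (hκ : TailBound κ (1 + v) (1 + v'))
    (hv : v ∈ Ioc (-gg ^ 2) G) (hv' : v' ∈ Ioc (-gg ^ 2) G) (k : ℕ) :
    |branchWeight (k + 1) v * (f (1 / (2 * k + 3 + v)) - f 0) -
        branchWeight (k + 1) v' * (f (1 / (2 * k + 3 + v')) - f 0)| ≤
      c * 1.18 * κ * |v - v'| * (1 / ((k + 1) * (k + 2) * (k + 3))) := by
  have hc := hf.nonneg
  have : (0 : ℝ) ≤ k := k.cast_nonneg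
  have hv1 := neg_one_lt_of_mem hv
  have hv1' := neg_one_lt_of_mem hv'
  have hz : 0 < 2 * k + 3 + v := by linarith
  have hz' : 0 < 2 * k + 3 + v' := by linarith
  have hD : 0 < (2 * k + 3 + v) ^ 2 - 1 := by nlinarith
  have hD' : 0 < (2 * k + 3 + v') ^ 2 - 1 := by nlinarith
  have hmem := Ioo_subset_Ico_self (one_div_branch_succ_mem hv k)
  have hmem' := Ioo_subset_Ico_self (one_div_branch_succ_mem hv' k)
  have hlip := hf.left _ hmem _ hmem'
  rw [abs_one_div_sub_one_div hz hz', add_sub_add_left_eq_sub] at hlip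
  calc _ ≤ |branchWeight (k + 1) v - branchWeight (k + 1) v'| * |f (1 / (2 * k + 3 + v)) - f 0| +
        branchWeight (k + 1) v' *
          |f (1 / (2 * k + 3 + v)) - f 0 - (f (1 / (2 * k + 3 + v')) - f 0)| :=
        abs_mul_sub_mul_le (branchWeight_nonneg _ hv1')
    _ ≤ |branchWeight (k + 1) v - branchWeight (k + 1) v'| *
          (c * 1.18 * (1 / (2 * k + 3 + v))) + branchWeight (k + 1) v' *
          (c * 1.18 * (|v - v'| / ((2 * k + 3 + v) * (2 * k + 3 + v')))) := by
        rw [sub_sub_sub_cancel_right]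
        gcongr
        · exact hf.abs_sub_zero_le hmem
        · exact branchWeight_nonneg _ hv1'
    _ = c * 1.18 * |v - v'| * ((2 * |(2 * k + 2) ^ 2 - 1 - (1 + v) * (1 + v')| * (2 * k + 3 + v') +
          2 * (1 + v') * ((2 * k + 3 + v) ^ 2 - 1)) / ((2 * k + 3 + v) * (2 * k + 3 + v') *
          ((2 * k + 3 + v) ^ 2 - 1) * ((2 * k + 3 + v') ^ 2 - 1))) := by
        rw [abs_branchWeight_succ_sub k hv1 hv1', branchWeight_succ_eq]
        field_simp
    _ ≤ c * 1.18 * |v - v'| * (κ / ((k + 1) * (k + 2) * (k + 3))) := by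
        gcongr ?_ * ?_
        rw [div_le_div_iff₀ (by positivity) (by positivity)]
        have hκk := hκ k
        rw [show 2 * (k : ℝ) + 2 + (1 + v) = 2 * k + 3 + v by ring,
          show 2 * (k : ℝ) + 2 + (1 + v') = 2 * k + 3 + v' by ring] at hκk
        linarith
    _ = _ := by ring

lemma OscBound.hasSum_centered (hf : OscBound f c) (hv : v ∈ Ioc (-gg ^ 2) G) :
    HasSum (fun m : ℕ ↦ branchWeight m v * (f (1 / (2 * m + 1 + v)) - f 0))
      (branchMean f v - f 0) := by
  have mean := (summable_branchWeight_mul hf.abs_le hv).hasSum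
  have const := (hasSum_branchWeight (neg_one_lt_of_mem hv)).mul_right (f 0)
  simpa only [mul_sub, one_mul, branchMean] using mean.sub const

lemma OscBound.abs_branchMean_sub_le (hf : OscBound f c) (ha : 0 < a) (hv : v ∈ Ioc (-gg ^ 2) G)
    (hv' : v' ∈ Ioc (-gg ^ 2) G) (hav : a ≤ 1 + v) (hav' : a ≤ 1 + v')
    (hκ : TailBound κ (1 + v) (1 + v')) :
    |branchMean f v - branchMean f v'| ≤
      c * (0.3 / ((1 + a) * a ^ 2) + 0.549 / (1 + a) ^ 2 + 1.18 * κ / 4) * |v - v'| := by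
  have point (k : ℕ) (v : ℝ) : 2 * ((k + 1 : ℕ) : ℝ) + 1 + v = 2 * k + 3 + v := by
    push_cast
    ring
  have diff := (hasSum_nat_add_iff' 1).2 ((hf.hasSum_centered hv).sub (hf.hasSum_centered hv'))
  simp only [Finset.sum_range_one, point, Nat.cast_zero, mul_zero, zero_add,
    sub_sub_sub_cancel_right] at diff
  have tail := diff.norm_le_of_bounded
    (hasSum_one_div_mul_mul.mul_left (c * 1.18 * κ * |v - v'|)) (hf.abs_tail_sub_le hκ hv hv')
  rw [Real.norm_eq_abs] at tail
  have head := hf.abs_head_sub_le ha hv hv' hav hav'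
  have triangle := abs_sub_abs_le_abs_sub (branchMean f v - branchMean f v')
    (branchWeight 0 v * (f (1 / (1 + v)) - f 0) - branchWeight 0 v' * (f (1 / (1 + v')) - f 0))
  linarith

lemma tailBound_of_abs_le {σ s s' : ℝ} (hs' : 0 ≤ s')
    (hσ : ∀ k : ℕ, |(2 * (k : ℝ) + 2) ^ 2 - 1 - s * s'| ≤ (2 * k + 2) ^ 2 - 1 - σ)
    (h : ∀ k : ℕ, ((k : ℝ) + 1) * (k + 2) * (k + 3) *
        (2 * ((2 * k + 2) ^ 2 - 1 - σ) * (2 * k + 2 + s') +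
          2 * s' * ((2 * k + 2 + s) ^ 2 - 1)) ≤
      κ * ((2 * k + 2 + s) * (2 * k + 2 + s') * ((2 * k + 2 + s) ^ 2 - 1) *
        ((2 * k + 2 + s') ^ 2 - 1))) : TailBound κ s s' :=
  fun k ↦ le_trans (by gcongr; exact hσ k) (h k)

lemma tailBound_neg {s s' : ℝ} (hs : s ∈ Icc 0.618 1) (hs' : s' ∈ Icc 0.618 1) :
    TailBound 0.545 s s' := by
  obtain ⟨t, ht, rfl⟩ := exists_nonneg_add_of_le hs.1
  obtain ⟨t', ht', rfl⟩ := exists_nonneg_add_of_le hs'.1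
  refine tailBound_of_abs_le (σ := 0.38) (by linarith) (fun k ↦ ?_) (fun k ↦ ?_) <;>
    have : (0 : ℝ) ≤ k := k.cast_nonneg
  · refine abs_le.2 ⟨?_, ?_⟩ <;> nlinarith [hs.2, hs'.2, mul_nonneg ht ht']
  · -- As a polynomial in `k`, `t`, `t'` the difference has nonnegative coefficients.
    rw [← sub_nonneg]
    ring_nf
    positivity

lemma tailBound_pos {s s' : ℝ} (hs : s ∈ Icc 1 1.382) (hs' : s' ∈ Icc 1 1.382) :
    TailBound 0.33 s s' := by
  obtain ⟨t, ht, rfl⟩ := exists_nonneg_add_of_le hs.1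
  obtain ⟨t', ht', rfl⟩ := exists_nonneg_add_of_le hs'.1
  refine tailBound_of_abs_le (σ := 1) (by linarith) (fun k ↦ ?_) (fun k ↦ ?_) <;>
    have : (0 : ℝ) ≤ k := k.cast_nonneg
  · refine abs_le.2 ⟨?_, ?_⟩ <;> nlinarith [hs.2, hs'.2, mul_nonneg ht ht']
  · rw [← sub_nonneg]
    ring_nf
    positivity

lemma tailBound_right {s s' : ℝ} (hs : s ∈ Icc 1.3819 2.6181) (hs' : s' ∈ Icc 1.3819 2.6181) :
    TailBound 0.27 s s' := by
  obtain ⟨t, ht, rfl⟩ := exists_nonneg_add_of_le hs.1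
  obtain ⟨t', ht', rfl⟩ := exists_nonneg_add_of_le hs'.1
  refine tailBound_of_abs_le (σ := -1) (by linarith) (fun k ↦ ?_) (fun k ↦ ?_) <;>
    have : (0 : ℝ) ≤ k := k.cast_nonneg
  · refine abs_le.2 ⟨?_, ?_⟩ <;> nlinarith [hs.2, hs'.2, mul_nonneg ht ht']
  · rw [← sub_nonneg]
    ring_nf
    positivity

lemma OscBound.abs_branchMean_sub_le_neg (hf : OscBound f c) (hv : v ∈ Ioc (-gg ^ 2) 0)
    (hv' : v' ∈ Ioc (-gg ^ 2) 0) : |branchMean f v - branchMean f v'| ≤ c * 0.87 * |v - v'| := by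
  obtain ⟨-, hg⟩ := gg_sq_mem_Ioo
  obtain ⟨hG, -⟩ := G_mem_Ioo
  have mem {u : ℝ} (hu : u ∈ Ioc (-gg ^ 2) 0) : 1 + u ∈ Icc 0.618 1 :=
    ⟨by linarith [hu.1], by linarith [hu.2]⟩
  refine (hf.abs_branchMean_sub_le (a := 0.618) (by norm_num) ⟨hv.1, by linarith [hv.2]⟩
    ⟨hv'.1, by linarith [hv'.2]⟩ (mem hv).1 (mem hv').1 (tailBound_neg (mem hv) (mem hv'))).trans ?_
  have := hf.nonneg
  gcongr
  norm_num

lemma OscBound.abs_branchMean_sub_le_pos (hf : OscBound f c) (hv : v ∈ Icc 0 (gg ^ 2))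
    (hv' : v' ∈ Icc 0 (gg ^ 2)) :
    |branchMean f v - branchMean f v'| ≤ c * 0.387 * |v - v'| := by
  obtain ⟨hg, hg'⟩ := gg_sq_mem_Ioo
  obtain ⟨hG, -⟩ := G_mem_Ioo
  have mem {u : ℝ} (hu : u ∈ Icc 0 (gg ^ 2)) : 1 + u ∈ Icc 1 1.382 :=
    ⟨by linarith [hu.1], by linarith [hu.2]⟩
  refine (hf.abs_branchMean_sub_le (a := 1) one_pos
    ⟨by linarith [hv.1], by linarith [hv.2]⟩ ⟨by linarith [hv'.1], by linarith [hv'.2]⟩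
    (mem hv).1 (mem hv').1 (tailBound_pos (mem hv) (mem hv'))).trans ?_
  have := hf.nonneg
  gcongr
  norm_num

lemma OscBound.abs_branchMean_sub_le_right (hf : OscBound f c) (hv : v ∈ Icc (gg ^ 2) G)
    (hv' : v' ∈ Icc (gg ^ 2) G) :
    |branchMean f v - branchMean f v'| ≤ c * 0.2455 * |v - v'| := by
  obtain ⟨hg, -⟩ := gg_sq_mem_Ioo
  obtain ⟨-, hG⟩ := G_mem_Ioo
  have mem {u : ℝ} (hu : u ∈ Icc (gg ^ 2) G) : 1 + u ∈ Icc 1.3819 2.6181 :=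
    ⟨by linarith [hu.1], by linarith [hu.2]⟩
  refine (hf.abs_branchMean_sub_le (a := 1.3819) (by norm_num)
    ⟨by linarith [hv.1], hv.2⟩ ⟨by linarith [hv'.1], hv'.2⟩
    (mem hv).1 (mem hv').1 (tailBound_right (mem hv) (mem hv'))).trans ?_
  have := hf.nonneg
  gcongr
  norm_num

/-- The transition operator `U` on real functions, written in terms of signed states: given `w`, the
signed state is `w` with probability `(1 - w) / 2` and `-w` with probability `(1 + w) / 2` if
`w < g²`, and it is `w` otherwise. -/
noncomputable def transitionMean (f : ℝ → ℝ) (w : ℝ) : ℝ :=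
  if w < gg ^ 2 then (1 - w) / 2 * branchMean f w + (1 + w) / 2 * branchMean f (-w)
  else branchMean f w

lemma transitionMean_zero (f : ℝ → ℝ) : transitionMean f 0 = branchMean f 0 := by
  rw [transitionMean, if_pos (by linarith [gg_sq_mem_Ioo.1]), neg_zero]
  ring

lemma OscBound.abs_branchMean_sub_neg_le (hf : OscBound f c) {w : ℝ} (hw : w ∈ Ico 0 (gg ^ 2)) :
    |branchMean f w - branchMean f (-w)| ≤ c * (0.387 + 0.87) * w := by
  have hg := hw.1.trans_lt hw.2
  have hpos := hf.abs_branchMean_sub_le_pos (Ico_subset_Icc_self hw) ⟨le_rfl, hg.le⟩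
  have hneg := hf.abs_branchMean_sub_le_neg (v := 0) ⟨by linarith, le_rfl⟩
    ⟨neg_lt_neg hw.2, neg_nonpos.2 hw.1⟩
  rw [sub_zero, abs_of_nonneg hw.1] at hpos
  rw [sub_neg_eq_add, zero_add, abs_of_nonneg hw.1] at hneg
  linarith [_root_.abs_sub_le (branchMean f w) (branchMean f 0) (branchMean f (-w))]

lemma OscBound.abs_transitionMean_sub_le_left (hf : OscBound f c) {w w' : ℝ}
    (hw : w ∈ Ico 0 (gg ^ 2)) (hw' : w' ∈ Ico 0 (gg ^ 2)) :
    |transitionMean f w - transitionMean f w'| ≤ c * 0.8234 * 1.18 * |w - w'| := by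
  obtain ⟨-, hg⟩ := gg_sq_mem_Ioo
  have hδ : 0 ≤ c * |w - w'| := mul_nonneg hf.nonneg (abs_nonneg _)
  have hw₁ : 0 ≤ 1 - w := by linarith [hw.2]
  have hw₂ : 0 ≤ 1 + w := by linarith [hw.1]
  have hpos := hf.abs_branchMean_sub_le_pos (Ico_subset_Icc_self hw) (Ico_subset_Icc_self hw')
  have hneg := hf.abs_branchMean_sub_le_neg ⟨neg_lt_neg hw.2, neg_nonpos.2 hw.1⟩
    ⟨neg_lt_neg hw'.2, neg_nonpos.2 hw'.1⟩
  rw [neg_sub_neg, abs_sub_comm w' w] at hneg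
  rw [transitionMean, transitionMean, if_pos hw.2, if_pos hw'.2]
  calc _ = |(1 - w) / 2 * (branchMean f w - branchMean f w') +
          (1 + w) / 2 * (branchMean f (-w) - branchMean f (-w')) -
          (w - w') / 2 * (branchMean f w' - branchMean f (-w'))| := by
        ring_nf
    _ ≤ (1 - w) / 2 * |branchMean f w - branchMean f w'| +
          (1 + w) / 2 * |branchMean f (-w) - branchMean f (-w')| +
          |w - w'| / 2 * |branchMean f w' - branchMean f (-w')| := by
        refine (abs_sub _ _).trans (add_le_add ((abs_add_le _ _).trans (add_le_add ?_ ?_)) ?_)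
        · rw [abs_mul, abs_of_nonneg (by linarith)]
        · rw [abs_mul, abs_of_nonneg (by linarith)]
        · rw [abs_mul, abs_div, abs_two]
    _ ≤ (1 - w) / 2 * (c * 0.387 * |w - w'|) + (1 + w) / 2 * (c * 0.87 * |w - w'|) +
          |w - w'| / 2 * (c * (0.387 + 0.87) * w') := by
        gcongr
        exact hf.abs_branchMean_sub_neg_le hw'
    _ = (0.6285 + 0.2415 * w + 0.6285 * w') * (c * |w - w'|) := by ring
    _ ≤ 0.8234 * 1.18 * (c * |w - w'|) := by
        gcongr
        linarith [hw.2, hw'.2]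
    _ = c * 0.8234 * 1.18 * |w - w'| := by ring

lemma OscBound.transitionMean (hf : OscBound f c) : OscBound (transitionMean f) (c * 0.8234) where
  left _ hw _ hw' := hf.abs_transitionMean_sub_le_left hw hw'
  right w hw w' hw' := by
    rw [OCF.transitionMean, OCF.transitionMean, if_neg hw.1.not_gt, if_neg hw'.1.not_gt]
    refine (hf.abs_branchMean_sub_le_right hw hw').trans ?_
    nlinarith [mul_nonneg hf.nonneg (abs_nonneg (w - w'))]
  jump w hw := by
    obtain ⟨hg, hg'⟩ := gg_sq_mem_Ioo
    obtain ⟨-, hG⟩ := G_mem_Ioo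
    have hc := hf.nonneg
    rw [transitionMean_zero, OCF.transitionMean, if_neg hw.1.not_gt]
    have hright := hf.abs_branchMean_sub_le_right hw ⟨le_rfl, hw.1.trans hw.2⟩
    have hleft := hf.abs_branchMean_sub_le_pos (v := gg ^ 2) (v' := 0)
      ⟨by linarith, le_rfl⟩ ⟨le_rfl, by linarith⟩
    rw [abs_of_nonneg (sub_nonneg.2 hw.1)] at hright
    rw [sub_zero, abs_of_pos (by linarith : 0 < gg ^ 2)] at hleft
    have hlength : c * w ≤ c * 1.6181 := by gcongr; linarith [hw.2]
    have hgap : c * gg ^ 2 ≤ c * 0.382 := by gcongr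
    linarith [_root_.abs_sub_le (branchMean f w) (branchMean f (gg ^ 2)) (branchMean f 0)]

end Lipschitz

section Kernel

variable {x : ℝ}

/-- The conditional distribution function `x ↦ (1 + v) x / (1 + x v)` attached to the signed state
`v`, from which both kernels `K 1` and `K (-1)` are assembled. -/
noncomputable def signedKernel (x v : ℝ) : ℝ := (1 + v) * x / (1 + x * v)

lemma K_one_of_lt {y : ℝ} (hy : y < gg ^ 2) : K 1 x y = (1 - y) / 2 * signedKernel x y := by
  rw [K, if_pos rfl, if_pos hy, signedKernel, div_mul_div_comm]
  ring_nf

lemma K_one_of_ge {y : ℝ} (hy : gg ^ 2 ≤ y) : K 1 x y = signedKernel x y := by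
  rw [K, if_pos rfl, if_neg hy.not_gt, signedKernel]

lemma K_neg_one_of_lt {y : ℝ} (hy : y < gg ^ 2) :
    K (-1) x y = (1 + y) / 2 * signedKernel x (-y) := by
  rw [K, if_neg (by decide), if_pos hy, signedKernel, div_mul_div_comm]
  ring_nf

lemma K_neg_one_of_ge {y : ℝ} (hy : gg ^ 2 ≤ y) : K (-1) x y = 0 := by
  rw [K, if_neg (by decide), if_neg hy.not_gt]

lemma signedKernel_zero : signedKernel x 0 = x := by simp [signedKernel]

lemma one_add_mul_pos (hx : x ∈ Icc 0 1) {v : ℝ} (hv : -1 < v) : 0 < 1 + x * v := by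
  rcases hx.1.eq_or_lt with rfl | hx0
  · simp
  · nlinarith [hx.2, mul_pos hx0 (neg_lt_iff_pos_add'.1 hv)]

lemma abs_signedKernel_le_one (hx : x ∈ Icc 0 1) {v : ℝ} (hv : -1 < v) :
    |signedKernel x v| ≤ 1 := by
  have hpos := one_add_mul_pos hx hv
  have hnum : 0 ≤ (1 + v) * x := mul_nonneg (by linarith) hx.1
  rw [signedKernel, abs_of_nonneg (by positivity), div_le_one hpos]
  linarith [hx.2]

lemma abs_signedKernel_sub_le (hx : x ∈ Icc 0 1) {a v v' : ℝ} (ha : 0 < a)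
    (hv : a ≤ 1 + x * v) (hv' : a ≤ 1 + x * v') :
    |signedKernel x v - signedKernel x v'| ≤ 1 / 4 / a ^ 2 * |v - v'| := by
  have hpos : 0 < 1 + x * v := ha.trans_le hv
  have hpos' : 0 < 1 + x * v' := ha.trans_le hv'
  have hdiff : signedKernel x v - signedKernel x v' =
      x * (1 - x) / ((1 + x * v) * (1 + x * v')) * (v - v') := by
    rw [signedKernel, signedKernel, div_sub_div _ _ hpos.ne' hpos'.ne', div_mul_eq_mul_div]
    congr 1
    ring
  have hx1 : 0 ≤ 1 - x := by linarith [hx.2]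
  have hx0 := hx.1
  rw [hdiff, abs_mul, abs_of_nonneg (by positivity)]
  gcongr
  · nlinarith [sq_nonneg (x - 1 / 2)]
  · nlinarith

lemma abs_half_mul_sub_le {p q k k' d L : ℝ} (hp : 0 ≤ p) (hk' : |k'| ≤ 1)
    (hpq : |p - q| = d) (hL : |k - k'| ≤ L * d) :
    |p / 2 * k - q / 2 * k'| ≤ (p / 2 * L + 1 / 2) * d := by
  calc |p / 2 * k - q / 2 * k'| = |p / 2 * (k - k') + (p - q) / 2 * k'| := by ring_nf
    _ ≤ p / 2 * |k - k'| + d / 2 * |k'| := by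
        refine (abs_add_le _ _).trans (add_le_add ?_ ?_)
        · rw [abs_mul, abs_of_nonneg (by linarith)]
        · rw [abs_mul, abs_div, abs_two, hpq]
    _ ≤ p / 2 * (L * d) + d / 2 * 1 := by
        have : 0 ≤ d := hpq ▸ abs_nonneg _
        gcongr
    _ = (p / 2 * L + 1 / 2) * d := by ring

lemma oscBound_K_one (hx : x ∈ Icc 0 1) : OscBound (K 1 x) 1 where
  left y hy y' hy' := by
    obtain ⟨-, hg⟩ := gg_sq_mem_Ioo
    have hlip := abs_signedKernel_sub_le hx one_pos (v := y) (v' := y')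
      (by nlinarith [hx.1, hy.1]) (by nlinarith [hx.1, hy'.1])
    rw [K_one_of_lt hy.2, K_one_of_lt hy'.2]
    refine (abs_half_mul_sub_le (by linarith [hy.2])
      (abs_signedKernel_le_one hx (by linarith [hy'.1])) ?_ hlip).trans ?_
    · rw [sub_sub_sub_cancel_left, abs_sub_comm]
    · gcongr
      linarith [hy.1]
  right y hy y' hy' := by
    have := gg_sq_mem_Ioo.1
    rw [K_one_of_ge hy.1, K_one_of_ge hy'.1]
    refine (abs_signedKernel_sub_le hx one_pos (by nlinarith [hx.1, hy.1])
      (by nlinarith [hx.1, hy'.1])).trans ?_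
    gcongr
    norm_num
  jump y hy := by
    obtain ⟨hg, -⟩ := gg_sq_mem_Ioo
    have hy0 : 0 < y := by linarith [hy.1]
    have hyG : y ≤ 1.6181 := hy.2.trans G_mem_Ioo.2.le
    have hpos := one_add_mul_pos hx (v := y) (by linarith)
    rw [K_one_of_ge hy.1, K_one_of_lt (by linarith), signedKernel_zero, signedKernel, sub_zero]
    rw [abs_le, le_sub_iff_add_le, sub_le_iff_le_add, le_div_iff₀ hpos, div_le_iff₀ hpos]
    have hxy : 0 ≤ x * y := mul_nonneg hx.1 hy0.le
    constructor
    · nlinarith [hx.1, hx.2]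
    · nlinarith [mul_nonneg (mul_nonneg hx.1 (sub_nonneg.2 hyG)) (sub_nonneg.2 hx.2),
        mul_nonneg hx.1 (sub_nonneg.2 hyG), sq_nonneg (x - 0.79)]

lemma oscBound_K_neg_one (hx : x ∈ Icc 0 1) : OscBound (K (-1) x) 1 where
  left y hy y' hy' := by
    obtain ⟨-, hg⟩ := gg_sq_mem_Ioo
    have hlower {u : ℝ} (hu : u ∈ Ico 0 (gg ^ 2)) : 0.618 ≤ 1 + x * -u := by
      nlinarith [hx.1, hx.2, hu.1, hu.2]
    have hlip := abs_signedKernel_sub_le hx (by norm_num) (hlower hy) (hlower hy')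
    rw [neg_sub_neg, abs_sub_comm y' y] at hlip
    rw [K_neg_one_of_lt hy.2, K_neg_one_of_lt hy'.2]
    refine (abs_half_mul_sub_le (by linarith [hy.1])
      (abs_signedKernel_le_one hx (by linarith [hy'.2])) ?_ hlip).trans ?_
    · rw [add_sub_add_left_eq_sub]
    · gcongr
      linarith [hy.2]
  right y hy y' hy' := by
    rw [K_neg_one_of_ge hy.1, K_neg_one_of_ge hy'.1, sub_zero, abs_zero]
    positivity
  jump y hy := by
    have hg : 0 < gg ^ 2 := by linarith [gg_sq_mem_Ioo.1]
    rw [K_neg_one_of_ge hy.1, K_neg_one_of_lt hg, neg_zero, signedKernel_zero, abs_le]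
    constructor <;> linarith [hx.1, hx.2]

lemma measurable_K (e : ℤ) (x : ℝ) : Measurable (K e x) := by
  unfold K
  split_ifs <;> exact Measurable.ite measurableSet_Iio (by fun_prop) (by fun_prop)

end Kernel

section Chain

lemma uF_one (w : ℝ) (m : ℕ) : uF w 1 (2 * m + 1) = 1 / (2 * m + 1 + w) := by
  rw [uF, if_pos rfl]
  push_cast
  rfl

lemma uF_neg_one_of_lt {w : ℝ} (hw : w < gg ^ 2) (m : ℕ) :
    uF w (-1) (2 * m + 1) = 1 / (2 * m + 1 + -w) := by
  rw [uF, if_neg (by decide), if_pos hw]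
  push_cast
  rfl

lemma PF_of_lt {w : ℝ} {e : ℤ} (he : (e : ℝ) ^ 2 = 1) (hew : -1 < e * w) (hw : w < gg ^ 2)
    (m : ℕ) : PF w e (2 * m + 1) = (1 - e * w) / 2 * branchWeight m (e * w) := by
  have hsq : 1 - w ^ 2 = (1 - e * w) * (1 + e * w) := by linear_combination w ^ 2 * he
  have h1 : 1 + e * w ≠ 0 := by linarith
  rw [PF, if_pos hw, hsq]
  cases m with
  | zero =>
    have h2 : 2 + e * w ≠ 0 := by linarith
    rw [if_pos (by simp), branchWeight]
    push_cast
    rw [sub_self, zero_add, one_add_one_eq_two]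
    field_simp
    ring
  | succ k =>
    rw [if_neg (by omega), branchWeight, div_mul_div_comm]
    push_cast
    ring_nf

lemma PF_one_of_ge {w : ℝ} (hw : gg ^ 2 ≤ w) (m : ℕ) : PF w 1 (2 * m + 1) = branchWeight m w := by
  have hw0 : 0 < w := by linarith [gg_sq_mem_Ioo.1]
  rw [PF, if_neg hw.not_gt]
  cases m with
  | zero =>
    rw [if_pos (by simp), branchWeight]
    push_cast
    field_simp
    ring
  | succ k =>
    rw [if_neg (by omega), branchWeight]
    push_cast
    ring_nf

lemma PF_neg_one_of_ge {w : ℝ} (hw : gg ^ 2 ≤ w) (m : ℕ) : PF w (-1) (2 * m + 1) = 0 := by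
  rw [PF, if_neg hw.not_gt, if_neg (show ¬(-1 : ℤ) = 1 by decide), mul_zero, zero_div]

/-- The law of the state reached from the signed state `v` by one branch followed by `n` steps of
the chain. -/
noncomputable def signedQiter (n : ℕ) (v : ℝ) : Measure ℝ :=
  Measure.sum fun m : ℕ ↦ ENNReal.ofReal (branchWeight m v) • Qiter n (1 / (2 * m + 1 + v))

lemma Qiter_succ_of_lt (n : ℕ) {w : ℝ} (hw : w ∈ Ico 0 (gg ^ 2)) :
    Qiter (n + 1) w = ENNReal.ofReal ((1 - w) / 2) • signedQiter n w +
      ENNReal.ofReal ((1 + w) / 2) • signedQiter n (-w) := by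
  have hg := gg_sq_mem_Ioo.2
  have hpos (m : ℕ) := PF_of_lt (w := w) (e := 1) (by simp) (by simp; linarith [hw.1]) hw.2 m
  have hneg (m : ℕ) := PF_of_lt (w := w) (e := -1) (by simp) (by simp; linarith [hw.2]) hw.2 m
  simp only [Int.cast_one, one_mul, Int.cast_neg, neg_one_mul, sub_neg_eq_add] at hpos hneg
  ext B hB
  simp only [Qiter, signedQiter, uF_one, uF_neg_one_of_lt hw.2, hpos, hneg,
    Measure.sum_apply _ hB, Measure.add_apply, Measure.smul_apply, smul_eq_mul,
    ENNReal.ofReal_mul (by linarith [hw.2] : 0 ≤ (1 - w) / 2),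
    ENNReal.ofReal_mul (by linarith [hw.1] : 0 ≤ (1 + w) / 2), mul_assoc, ENNReal.tsum_add,
    ENNReal.tsum_mul_left]

lemma Qiter_succ_of_ge (n : ℕ) {w : ℝ} (hw : gg ^ 2 ≤ w) :
    Qiter (n + 1) w = signedQiter n w := by
  simp only [Qiter, signedQiter, PF_one_of_ge hw, PF_neg_one_of_ge hw, uF_one,
    ENNReal.ofReal_zero, zero_smul, add_zero]

lemma mem_signed_of_mem {w : ℝ} (hw : w ∈ Icc 0 G) : w ∈ Ioc (-gg ^ 2) G :=
  ⟨by linarith [hw.1, gg_sq_mem_Ioo.1], hw.2⟩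

lemma neg_mem_signed_of_lt {w : ℝ} (hw : w ∈ Ico 0 (gg ^ 2)) : -w ∈ Ioc (-gg ^ 2) G :=
  ⟨neg_lt_neg hw.2, by linarith [hw.1, G_mem_Ioo.1]⟩

lemma signedQiter_apply_eq_of_forall {n : ℕ} {B : Set ℝ} (hB : MeasurableSet B) {b : ℝ≥0∞}
    (h : ∀ y ∈ Icc 0 G, Qiter n y B = b) {v : ℝ} (hv : v ∈ Ioc (-gg ^ 2) G) :
    signedQiter n v B = b := by
  have hv1 := neg_one_lt_of_mem hv
  have htotal : ∑' m, ENNReal.ofReal (branchWeight m v) = 1 := by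
    rw [← ENNReal.ofReal_tsum_of_nonneg (branchWeight_nonneg · hv1)
      (hasSum_branchWeight hv1).summable, (hasSum_branchWeight hv1).tsum_eq, ENNReal.ofReal_one]
  simp only [signedQiter, Measure.sum_apply _ hB, Measure.smul_apply, smul_eq_mul,
    h _ (one_div_branch_mem hv _), ENNReal.tsum_mul_right, htotal, one_mul]

lemma Qiter_apply_eq_of_forall {B : Set ℝ} (hB : MeasurableSet B) {b : ℝ≥0∞}
    (h : ∀ y ∈ Icc 0 G, Measure.dirac y B = b) (n : ℕ) :
    ∀ y ∈ Icc 0 G, Qiter n y B = b := by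
  induction n with
  | zero => exact h
  | succ n ih =>
    intro w hw
    rcases lt_or_ge w (gg ^ 2) with hwg | hwg
    · have hmem : w ∈ Ico 0 (gg ^ 2) := ⟨hw.1, hwg⟩
      have hg := gg_sq_mem_Ioo.2
      rw [Qiter_succ_of_lt n hmem, Measure.add_apply, Measure.smul_apply, Measure.smul_apply,
        signedQiter_apply_eq_of_forall hB ih (mem_signed_of_mem hw),
        signedQiter_apply_eq_of_forall hB ih (neg_mem_signed_of_lt hmem), smul_eq_mul, smul_eq_mul,
        ← add_mul, ← ENNReal.ofReal_add (by linarith) (by linarith [hw.1]), ← add_div,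
        sub_add_add_cancel, one_add_one_eq_two, div_self two_ne_zero, ENNReal.ofReal_one, one_mul]
    · rw [Qiter_succ_of_ge n hwg]
      exact signedQiter_apply_eq_of_forall hB ih (mem_signed_of_mem hw)

lemma isProbabilityMeasure_Qiter (n : ℕ) {w : ℝ} (hw : w ∈ Icc 0 G) :
    IsProbabilityMeasure (Qiter n w) :=
  ⟨Qiter_apply_eq_of_forall .univ (fun _ _ ↦ measure_univ) n w hw⟩

lemma ae_mem_Icc_Qiter (n : ℕ) {w : ℝ} (hw : w ∈ Icc 0 G) : ∀ᵐ y ∂Qiter n w, y ∈ Icc 0 G :=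
  Qiter_apply_eq_of_forall measurableSet_Icc.compl
    (fun y hy ↦ by simp [Measure.dirac_apply' _ measurableSet_Icc.compl, hy]) n w hw

lemma isProbabilityMeasure_signedQiter (n : ℕ) {v : ℝ} (hv : v ∈ Ioc (-gg ^ 2) G) :
    IsProbabilityMeasure (signedQiter n v) :=
  ⟨signedQiter_apply_eq_of_forall .univ
    (fun _ hy ↦ (isProbabilityMeasure_Qiter n hy).measure_univ) hv⟩

lemma ae_mem_Icc_signedQiter (n : ℕ) {v : ℝ} (hv : v ∈ Ioc (-gg ^ 2) G) :
    ∀ᵐ y ∂signedQiter n v, y ∈ Icc 0 G :=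
  signedQiter_apply_eq_of_forall measurableSet_Icc.compl (fun _ hy ↦ ae_mem_Icc_Qiter n hy) hv

variable {f : ℝ → ℝ} {M : ℝ}

lemma integrable_signedQiter (hf : Measurable f) (hM : ∀ y ∈ Icc 0 G, |f y| ≤ M) (n : ℕ) {v : ℝ}
    (hv : v ∈ Ioc (-gg ^ 2) G) : Integrable f (signedQiter n v) := by
  have := isProbabilityMeasure_signedQiter n hv
  exact .of_bound hf.aestronglyMeasurable M ((ae_mem_Icc_signedQiter n hv).mono hM)

lemma integral_signedQiter (hf : Measurable f) (hM : ∀ y ∈ Icc 0 G, |f y| ≤ M) (n : ℕ) {v : ℝ}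
    (hv : v ∈ Ioc (-gg ^ 2) G) :
    ∫ y, f y ∂signedQiter n v = branchMean (fun y ↦ ∫ z, f z ∂Qiter n y) v := by
  have hv1 := neg_one_lt_of_mem hv
  rw [signedQiter, integral_sum_measure (integrable_signedQiter hf hM n hv), branchMean]
  simp only [integral_smul_measure, smul_eq_mul, ENNReal.toReal_ofReal (branchWeight_nonneg _ hv1)]

lemma integral_Qiter_succ (hf : Measurable f) (hM : ∀ y ∈ Icc 0 G, |f y| ≤ M) (n : ℕ) {w : ℝ}
    (hw : w ∈ Icc 0 G) :
    ∫ y, f y ∂Qiter (n + 1) w = transitionMean (fun y ↦ ∫ z, f z ∂Qiter n y) w := by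
  have hg := gg_sq_mem_Ioo.2
  have hmem := mem_signed_of_mem hw
  rw [transitionMean]
  split_ifs with hwg
  · have hneg := neg_mem_signed_of_lt ⟨hw.1, hwg⟩
    rw [Qiter_succ_of_lt n ⟨hw.1, hwg⟩, integral_add_measure
      ((integrable_signedQiter hf hM n hmem).smul_measure ENNReal.ofReal_ne_top)
      ((integrable_signedQiter hf hM n hneg).smul_measure ENNReal.ofReal_ne_top),
      integral_smul_measure, integral_smul_measure, integral_signedQiter hf hM n hmem,
      integral_signedQiter hf hM n hneg, ENNReal.toReal_ofReal (by linarith),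
      ENNReal.toReal_ofReal (by linarith [hw.1]), smul_eq_mul, smul_eq_mul]
  · rw [Qiter_succ_of_ge n (not_lt.1 hwg), integral_signedQiter hf hM n hmem]

lemma OscBound.congr {f g : ℝ → ℝ} {c : ℝ} (hf : OscBound f c) (hfg : EqOn f g (Icc 0 G)) :
    OscBound g c := by
  have hG : gg ^ 2 ≤ G := by linarith [gg_sq_mem_Ioo.2, G_mem_Ioo.1]
  have hg : 0 ≤ gg ^ 2 := sq_nonneg _
  have hleft : EqOn f g (Ico 0 (gg ^ 2)) :=
    hfg.mono (Ico_subset_Icc_self.trans (Icc_subset_Icc_right hG))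
  have hright : EqOn f g (Icc (gg ^ 2) G) := hfg.mono (Icc_subset_Icc_left hg)
  refine ⟨fun y hy y' hy' ↦ ?_, fun y hy y' hy' ↦ ?_, fun y hy ↦ ?_⟩
  · rw [← hleft hy, ← hleft hy']
    exact hf.left y hy y' hy'
  · rw [← hright hy, ← hright hy']
    exact hf.right y hy y' hy'
  · rw [← hright hy, ← hfg ⟨le_rfl, hg.trans hG⟩]
    exact hf.jump y hy

lemma OscBound.integral_Qiter {c : ℝ} (hf : OscBound f c) (hfm : Measurable f) (n : ℕ) :
    OscBound (fun w ↦ ∫ y, f y ∂Qiter n w) (c * 0.8234 ^ n) := by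
  induction n with
  | zero => simpa [Qiter] using hf
  | succ n ih =>
    rw [pow_succ, ← mul_assoc]
    exact ih.transitionMean.congr fun w hw ↦ (integral_Qiter_succ hfm hf.abs_le n hw).symm

end Chain

section Stationarity

open ProbabilityTheory

/-- The density of `Qinf` on `W`. -/
noncomputable def density (w : ℝ) : ℝ :=
  (3 * log G)⁻¹ * (if w < gg ^ 2 then 1 / (1 + w) + 1 / (1 - w) else 1 / (1 + w))

/-- The density of `signedQinf`. -/
noncomputable def signedDensity (v : ℝ) : ℝ := (3 * log G)⁻¹ * (1 / (1 + v))

/-- The invariant law of the signed states, whose image under `|·|` is `Qinf`. -/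
noncomputable def signedQinf : Measure ℝ :=
  (volume.restrict (Ioo (-gg ^ 2) G)).withDensity fun v ↦ ENNReal.ofReal (signedDensity v)

lemma log_G_pos : 0 < log G := log_pos (by linarith [G_mem_Ioo.1])

lemma signedDensity_nonneg {v : ℝ} (hv : -1 < v) : 0 ≤ signedDensity v :=
  mul_nonneg (inv_nonneg.2 (by linarith [log_G_pos])) (one_div_nonneg.2 (by linarith))

lemma density_of_lt {w : ℝ} (hw : w < gg ^ 2) :
    density w = signedDensity w + signedDensity (-w) := by
  rw [density, if_pos hw, mul_add, signedDensity, signedDensity, ← sub_eq_add_neg]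

lemma density_of_ge {w : ℝ} (hw : gg ^ 2 ≤ w) : density w = signedDensity w := by
  rw [density, if_neg hw.not_gt, signedDensity]

lemma density_nonneg {w : ℝ} (hw : 0 ≤ w) : 0 ≤ density w := by
  rcases lt_or_ge w (gg ^ 2) with hwg | hwg
  · rw [density_of_lt hwg]
    exact add_nonneg (signedDensity_nonneg (by linarith))
      (signedDensity_nonneg (by linarith [gg_sq_mem_Ioo.2]))
  · rw [density_of_ge hwg]
    exact signedDensity_nonneg (by linarith)

lemma density_mul_half_one_sub {w : ℝ} (h : -1 < w) (h' : w < gg ^ 2) :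
    density w * ((1 - w) / 2) = signedDensity w := by
  have hpos : 1 + w ≠ 0 := by linarith
  have hneg : 1 + -w ≠ 0 := by linarith [gg_sq_mem_Ioo.2]
  rw [density_of_lt h', signedDensity, signedDensity]
  field_simp
  ring

lemma density_mul_half_one_add {w : ℝ} (h : -1 < w) (h' : w < gg ^ 2) :
    density w * ((1 + w) / 2) = signedDensity (-w) := by
  have hpos : 1 + w ≠ 0 := by linarith
  have hneg : 1 + -w ≠ 0 := by linarith [gg_sq_mem_Ioo.2]
  rw [density_of_lt h', signedDensity, signedDensity]
  field_simp
  ring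

@[fun_prop]
lemma measurable_density : Measurable density :=
  measurable_const.mul (.ite measurableSet_Iio (by fun_prop) (by fun_prop))

@[fun_prop]
lemma measurable_signedDensity : Measurable signedDensity := by
  unfold signedDensity
  fun_prop

lemma lintegral_Qinf {φ : ℝ → ℝ≥0∞} (hφ : Measurable φ) :
    ∫⁻ w, φ w ∂Qinf = ∫⁻ w in Ioo 0 G, ENNReal.ofReal (density w) * φ w := by
  have : Qinf = (volume.restrict (Icc 0 G)).withDensity fun w ↦ ENNReal.ofReal (density w) := rfl
  rw [this, lintegral_withDensity_eq_lintegral_mul _ (by fun_prop) hφ,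
    setLIntegral_congr Ioo_ae_eq_Icc.symm]
  rfl

lemma lintegral_signedQinf {φ : ℝ → ℝ≥0∞} (hφ : Measurable φ) :
    ∫⁻ v, φ v ∂signedQinf = ∫⁻ v in Ioo (-gg ^ 2) G, ENNReal.ofReal (signedDensity v) * φ v := by
  rw [signedQinf, lintegral_withDensity_eq_lintegral_mul _ (by fun_prop) hφ]
  rfl

lemma lintegral_Ioo_neg_eq_lintegral_Ioo_zero {a b : ℝ} (ha : 0 ≤ a) (hab : a ≤ b)
    {φ : ℝ → ℝ≥0∞} (hφ : Measurable φ) :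
    ∫⁻ v in Ioo (-a) b, φ v =
      ∫⁻ w in Ioo 0 b, (φ w + (Iio a).indicator (fun w ↦ φ (-w)) w) := by
  have hinter : Iio a ∩ Ioo 0 b = Ioo 0 a := by
    rw [← Ioi_inter_Iio, inter_left_comm, Iio_inter_Iio, min_eq_left hab, Ioi_inter_Iio]
  have hneg : ∫⁻ w in Ioo 0 a, φ (-w) = ∫⁻ v in Ioo (-a) 0, φ v := by
    simpa using (Measure.measurePreserving_neg volume).setLIntegral_comp_preimage
      (measurableSet_Ioo (a := -a) (b := 0)) hφ
  rw [lintegral_add_left hφ, setLIntegral_indicator measurableSet_Iio, hinter, hneg,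
    setLIntegral_congr (Ioo_ae_eq_Ioc (a := -a) (b := b)),
    setLIntegral_congr (Ioo_ae_eq_Ioc (a := 0) (b := b)),
    setLIntegral_congr (Ioo_ae_eq_Ioc (a := -a) (b := 0)), add_comm,
    ← lintegral_union measurableSet_Ioc (Ioc_disjoint_Ioc_of_le le_rfl),
    Ioc_union_Ioc_eq_Ioc (neg_nonpos.2 ha) (ha.trans hab)]

lemma lintegral_Qinf_eq_lintegral_signedQinf {φ ψ : ℝ → ℝ≥0∞} (hφ : Measurable φ)
    (hψ : Measurable ψ)
    (hlt : ∀ w ∈ Ico 0 (gg ^ 2),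
      φ w = ENNReal.ofReal ((1 - w) / 2) * ψ w + ENNReal.ofReal ((1 + w) / 2) * ψ (-w))
    (hge : ∀ w, gg ^ 2 ≤ w → φ w = ψ w) :
    ∫⁻ w, φ w ∂Qinf = ∫⁻ v, ψ v ∂signedQinf := by
  obtain ⟨hg, hg'⟩ := gg_sq_mem_Ioo
  rw [lintegral_Qinf hφ, lintegral_signedQinf hψ, lintegral_Ioo_neg_eq_lintegral_Ioo_zero
    (by linarith) (by linarith [G_mem_Ioo.1]) (by fun_prop)]
  refine setLIntegral_congr_fun measurableSet_Ioo fun w hw ↦ ?_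
  rcases lt_or_ge w (gg ^ 2) with hwg | hwg
  · have hρ := density_nonneg hw.1.le
    have hw1 : -1 < w := by linarith [hw.1]
    rw [indicator_of_mem (mem_Iio.2 hwg), hlt w ⟨hw.1.le, hwg⟩, mul_add, ← mul_assoc, ← mul_assoc,
      ← ENNReal.ofReal_mul hρ, ← ENNReal.ofReal_mul hρ, density_mul_half_one_sub hw1 hwg,
      density_mul_half_one_add hw1 hwg]
  · rw [indicator_of_notMem (notMem_Iio.2 hwg), hge w hwg, density_of_ge hwg, add_zero]

lemma log_one_add_G : log (1 + G) = 2 * log G := by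
  have : 1 + G = G ^ 2 := by
    linear_combination -G_mul_one_sub_gg_sq - G * G_eq_two_sub
  rw [this, log_pow, Nat.cast_ofNat]

lemma log_one_sub_gg_sq : log (1 - gg ^ 2) = -log G := by
  rw [eq_inv_of_mul_eq_one_right G_mul_one_sub_gg_sq, log_inv]

lemma lintegral_signedDensity :
    ∫⁻ v in Ioo (-gg ^ 2) G, ENNReal.ofReal (signedDensity v) = 1 := by
  have hg := gg_sq_mem_Ioo
  have hle : -gg ^ 2 ≤ G := by linarith [hg.1, G_mem_Ioo.1]
  have hv1 {v : ℝ} (hv : v ∈ Icc (-gg ^ 2) G) : 0 < 1 + v := by linarith [hv.1, hg.2]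
  have hcont : ContinuousOn signedDensity (Icc (-gg ^ 2) G) :=
    continuousOn_const.mul (continuousOn_const.div (by fun_prop) fun v hv ↦ (hv1 hv).ne')
  have hderiv : ∀ v ∈ uIcc (-gg ^ 2) G,
      HasDerivAt (fun v ↦ (3 * log G)⁻¹ * log (1 + v)) (signedDensity v) v := fun v hv ↦
    (((hasDerivAt_id v).const_add 1).log (hv1 (by rwa [uIcc_of_le hle] at hv)).ne').const_mul _
  have hnonneg : 0 ≤ᵐ[volume.restrict (Icc (-gg ^ 2) G)] signedDensity := by
    filter_upwards [ae_restrict_mem measurableSet_Icc] with v hv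
    exact signedDensity_nonneg (by linarith [hv1 hv])
  rw [setLIntegral_congr Ioo_ae_eq_Icc,
    ← ofReal_integral_eq_lintegral_ofReal hcont.integrableOn_Icc hnonneg,
    integral_Icc_eq_integral_Ioc, ← intervalIntegral.integral_of_le hle,
    intervalIntegral.integral_eq_sub_of_hasDerivAt hderiv (hcont.intervalIntegrable_of_Icc hle),
    ← sub_eq_add_neg, log_one_add_G, log_one_sub_gg_sq, ENNReal.ofReal_eq_one]
  have := log_G_pos.ne'
  field_simp
  norm_num

instance isProbabilityMeasure_Qinf : IsProbabilityMeasure Qinf := by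
  refine ⟨?_⟩
  have hg := gg_sq_mem_Ioo.2
  rw [← lintegral_one]
  change ∫⁻ w, (1 : ℝ → ℝ≥0∞) w ∂Qinf = 1
  rw [lintegral_Qinf_eq_lintegral_signedQinf (φ := 1) (ψ := 1) measurable_one
    measurable_one (fun w hw ↦ ?_) (fun _ _ ↦ rfl), lintegral_signedQinf measurable_one]
  · simpa using lintegral_signedDensity
  · rw [Pi.one_apply, Pi.one_apply, mul_one, mul_one, ← ENNReal.ofReal_add (by linarith [hw.2])
      (by linarith [hw.1]), ← add_div, sub_add_add_cancel, one_add_one_eq_two,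
      div_self two_ne_zero, ENNReal.ofReal_one]

lemma ae_mem_Icc_Qinf : ∀ᵐ w ∂Qinf, w ∈ Icc 0 G :=
  (withDensity_absolutelyContinuous _ _).ae_le (ae_restrict_mem measurableSet_Icc)

lemma image_one_div_add_Ioo {k a b : ℝ} (ha : 0 < k + a) (hb : 0 < k + b) :
    (fun v ↦ 1 / (k + v)) '' Ioo a b = Ioo (1 / (k + b)) (1 / (k + a)) := by
  ext y
  constructor
  · rintro ⟨v, hv, rfl⟩
    exact ⟨one_div_lt_one_div_of_lt (by linarith [hv.1]) (by linarith [hv.2]),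
      one_div_lt_one_div_of_lt ha (by linarith [hv.1])⟩
  · rintro ⟨hyb, hya⟩
    have hy : 0 < y := (one_div_pos.2 hb).trans hyb
    have hlower := (lt_one_div hy ha).1 hya
    have hupper := (one_div_lt hb hy).1 hyb
    exact ⟨1 / y - k, ⟨by linarith, by linarith⟩, by simp⟩

lemma lintegral_Ioo_one_div_add {k a b : ℝ} (ha : 0 < k + a) (hb : 0 < k + b) (φ : ℝ → ℝ≥0∞) :
    ∫⁻ y in Ioo (1 / (k + b)) (1 / (k + a)), φ y =
      ∫⁻ v in Ioo a b, ENNReal.ofReal (1 / (k + v) ^ 2) * φ (1 / (k + v)) := by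
  have hderiv : ∀ v ∈ Ioo a b,
      HasDerivWithinAt (fun v ↦ 1 / (k + v)) (-1 / (k + v) ^ 2) (Ioo a b) v := fun v hv ↦ by
    have hv0 : k + v ≠ 0 := by linarith [hv.1]
    simp only [one_div]
    exact (((hasDerivAt_id v).const_add k).inv hv0).hasDerivWithinAt
  have hinj : InjOn (fun v ↦ 1 / (k + v)) (Ioo a b) := fun v _ v' _ h ↦ by
    simpa using h
  rw [← image_one_div_add_Ioo ha hb,
    lintegral_image_eq_lintegral_abs_deriv_mul measurableSet_Ioo hderiv hinj]
  simp only [abs_div, abs_neg, abs_one, abs_sq]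

lemma one_div_sq_mul_signedDensity_one_div {t : ℝ} (ht : 0 < t) :
    1 / t ^ 2 * signedDensity (1 / t) = (3 * log G)⁻¹ * (1 / (t * (1 + t))) := by
  have hsum : 1 + 1 / t = (1 + t) / t := by field_simp; ring
  rw [signedDensity, hsum]
  field_simp

lemma one_div_sq_mul_signedDensity_add {t : ℝ} (ht : 1 < t) :
    1 / t ^ 2 * (signedDensity (1 / t) + signedDensity (-(1 / t))) =
      (3 * log G)⁻¹ * (2 / (t ^ 2 - 1)) := by
  have ht0 : t ≠ 0 := by linarith
  have hpos : t + 1 ≠ 0 := by linarith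
  have hneg : t - 1 ≠ 0 := by linarith
  have hsum : 1 + 1 / t = (t + 1) / t := by field_simp
  have hsub : 1 + -(1 / t) = (t - 1) / t := by field_simp; ring
  have hprod : t ^ 2 - 1 = (t + 1) * (t - 1) := by ring
  rw [signedDensity, signedDensity, hsum, hsub, hprod]
  field_simp
  ring

lemma signedDensity_mul_branchWeight {v : ℝ} (hv : v ∈ Ioc (-gg ^ 2) G) (m : ℕ) :
    signedDensity v * branchWeight m v =
      1 / (2 * m + 1 + v) ^ 2 * density (1 / (2 * m + 1 + v)) := by
  have hv1 : 0 < 1 + v := by linarith [neg_one_lt_of_mem hv]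
  cases m with
  | zero =>
    rw [Nat.cast_zero, mul_zero, zero_add, density_of_ge (one_div_branch_zero_mem hv).1,
      one_div_sq_mul_signedDensity_one_div hv1, signedDensity, branchWeight, mul_assoc,
      one_div_mul_one_div, ← add_assoc, one_add_one_eq_two]
  | succ k =>
    have : (0 : ℝ) ≤ k := k.cast_nonneg
    have hbranch : 2 * ((k + 1 : ℕ) : ℝ) + 1 + v = 2 * k + 3 + v := by push_cast; ring
    rw [hbranch, density_of_lt (one_div_branch_succ_mem hv k).2,
      one_div_sq_mul_signedDensity_add (by linarith), signedDensity, branchWeight_succ_eq]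
    field_simp

lemma iUnion_Ioc_succ_of_antitone {a : ℕ → ℝ} (ha : Antitone a) {l : ℝ} (hl : ∀ m, l ≤ a m)
    (hlim : Tendsto a atTop (nhds l)) : ⋃ m, Ioc (a (m + 1)) (a m) = Ioc l (a 0) := by
  ext y
  simp only [mem_iUnion, mem_Ioc]
  constructor
  · rintro ⟨m, hlower, hupper⟩
    exact ⟨(hl _).trans_lt hlower, hupper.trans (ha m.zero_le)⟩
  · rintro ⟨hly, hy⟩
    have hex : ∃ m, a m < y := (hlim.eventually_lt_const hly).exists
    obtain ⟨k, hk⟩ : ∃ k, Nat.find hex = k + 1 :=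
      Nat.exists_eq_succ_of_ne_zero fun h0 ↦ (h0 ▸ Nat.find_spec hex).not_ge hy
    exact ⟨k, hk ▸ Nat.find_spec hex, not_lt.1 (Nat.find_min hex (by omega))⟩

/-- The right end point of the range `{1 / (2 * m + 1 + v) : v ∈ (-gg ^ 2, G]}` of the `m`-th
branch; its left end point is `branchEnd (m + 1)`. -/
noncomputable def branchEnd (m : ℕ) : ℝ := 1 / (2 * m + 1 + -gg ^ 2)

lemma branchEnd_zero : branchEnd 0 = G := by
  rw [branchEnd, Nat.cast_zero, mul_zero, zero_add, ← sub_eq_add_neg,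
    eq_inv_of_mul_eq_one_left G_mul_one_sub_gg_sq, one_div]

lemma branchEnd_succ (m : ℕ) : branchEnd (m + 1) = 1 / (2 * m + 1 + G) := by
  rw [branchEnd, G_eq_two_sub]
  push_cast
  ring_nf

lemma branchEnd_pos (m : ℕ) : 0 < branchEnd m :=
  one_div_pos.2 (by linarith [gg_sq_mem_Ioo.2, (m.cast_nonneg : (0 : ℝ) ≤ m)])

lemma antitone_branchEnd : Antitone branchEnd := fun m n hmn ↦ by
  have : (0 : ℝ) ≤ m := m.cast_nonneg
  have : (m : ℝ) ≤ n := by exact_mod_cast hmn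
  exact one_div_le_one_div_of_le (by linarith [gg_sq_mem_Ioo.2]) (by linarith)

lemma tendsto_branchEnd : Tendsto branchEnd atTop (nhds 0) := by
  unfold branchEnd
  simp only [one_div]
  refine tendsto_inv_atTop_zero.comp (tendsto_atTop_add_const_right _ _
    (tendsto_atTop_add_const_right _ _ ?_))
  exact tendsto_natCast_atTop_atTop.const_mul_atTop two_pos

lemma iUnion_Ioc_branchEnd : ⋃ m, Ioc (branchEnd (m + 1)) (branchEnd m) = Ioc 0 G := by
  rw [iUnion_Ioc_succ_of_antitone antitone_branchEnd (fun m ↦ (branchEnd_pos m).le)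
    tendsto_branchEnd, branchEnd_zero]

lemma lintegral_Ioc_branchEnd (φ : ℝ → ℝ≥0∞) (m : ℕ) :
    ∫⁻ y in Ioc (branchEnd (m + 1)) (branchEnd m), ENNReal.ofReal (density y) * φ y =
      ∫⁻ v in Ioo (-gg ^ 2) G, ENNReal.ofReal (signedDensity v) *
        (ENNReal.ofReal (branchWeight m v) * φ (1 / (2 * m + 1 + v))) := by
  have : (0 : ℝ) ≤ m := m.cast_nonneg
  rw [← setLIntegral_congr Ioo_ae_eq_Ioc, branchEnd_succ, branchEnd, lintegral_Ioo_one_div_add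
    (by linarith [gg_sq_mem_Ioo.2]) (by linarith [G_mem_Ioo.1])]
  refine setLIntegral_congr_fun measurableSet_Ioo fun v hv ↦ ?_
  have hv' := Ioo_subset_Ioc_self hv
  rw [← mul_assoc, ← mul_assoc, ← ENNReal.ofReal_mul (by positivity),
    ← ENNReal.ofReal_mul (signedDensity_nonneg (neg_one_lt_of_mem hv')),
    signedDensity_mul_branchWeight hv']

@[fun_prop]
lemma measurable_branchWeight (m : ℕ) : Measurable (branchWeight m) := by
  cases m <;> unfold branchWeight <;> fun_prop

lemma lintegral_signedQinf_tsum_branch {φ : ℝ → ℝ≥0∞} (hφ : Measurable φ) :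
    ∫⁻ v, ∑' m : ℕ, ENNReal.ofReal (branchWeight m v) * φ (1 / (2 * m + 1 + v)) ∂signedQinf =
      ∫⁻ w, φ w ∂Qinf := by
  rw [lintegral_signedQinf (.tsum fun m ↦ by fun_prop), lintegral_Qinf hφ,
    setLIntegral_congr (Ioo_ae_eq_Ioc (a := 0)), ← iUnion_Ioc_branchEnd,
    lintegral_iUnion (fun _ ↦ measurableSet_Ioc)
      (by exact antitone_branchEnd.pairwise_disjoint_on_Ioc_succ)]
  simp only [lintegral_Ioc_branchEnd, ← ENNReal.tsum_mul_left]
  exact lintegral_tsum fun m ↦ by fun_prop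

@[fun_prop]
lemma measurable_PF (e i : ℤ) : Measurable fun w ↦ PF w e i :=
  .ite measurableSet_Iio (by fun_prop) (by fun_prop)

@[fun_prop]
lemma measurable_uF (e i : ℤ) : Measurable fun w ↦ uF w e i := by
  unfold uF
  split_ifs
  · fun_prop
  · exact .ite measurableSet_Iio (by fun_prop) (by fun_prop)

lemma measurable_Qiter (n : ℕ) : Measurable (Qiter n) := by
  induction n with
  | zero => exact Measure.measurable_dirac
  | succ n ih =>
    refine Measure.measurable_of_measurable_coe _ fun B hB ↦ ?_
    have (e i : ℤ) : Measurable fun w ↦ Qiter n (uF w e i) B :=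
      (Measure.measurable_coe hB).comp (ih.comp (measurable_uF e i))
    simp only [Qiter, Measure.sum_apply _ hB, Measure.add_apply, Measure.smul_apply, smul_eq_mul]
    exact .tsum fun m ↦ by fun_prop

/-- The `n`-step transition probabilities as a Mathlib kernel on `ℝ`. -/
noncomputable def Qkernel (n : ℕ) : Kernel ℝ ℝ := ⟨Qiter n, measurable_Qiter n⟩

lemma lintegral_Qiter_succ_apply (n : ℕ) {B : Set ℝ} (hB : MeasurableSet B) :
    ∫⁻ w, Qiter (n + 1) w B ∂Qinf = ∫⁻ w, Qiter n w B ∂Qinf := by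
  have hmeas (n : ℕ) : Measurable fun w ↦ Qiter n w B :=
    (Measure.measurable_coe hB).comp (measurable_Qiter n)
  have hsigned (v : ℝ) : signedQiter n v B =
      ∑' m : ℕ, ENNReal.ofReal (branchWeight m v) * Qiter n (1 / (2 * m + 1 + v)) B := by
    simp only [signedQiter, Measure.sum_apply _ hB, Measure.smul_apply, smul_eq_mul]
  have hsigned_meas : Measurable fun v ↦ signedQiter n v B := by
    have (m : ℕ) : Measurable fun v : ℝ ↦ Qiter n (1 / (2 * m + 1 + v)) B :=
      (hmeas n).comp (by fun_prop)
    simp only [hsigned]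
    exact .tsum fun m ↦ by fun_prop
  rw [lintegral_Qinf_eq_lintegral_signedQinf (hmeas (n + 1)) hsigned_meas
    (fun w hw ↦ by simp [Qiter_succ_of_lt n hw]) (fun w hw ↦ by rw [Qiter_succ_of_ge n hw])]
  simp only [hsigned]
  exact lintegral_signedQinf_tsum_branch (hmeas n)

lemma invariant_Qkernel (n : ℕ) : (Qkernel n).Invariant Qinf := by
  induction n with
  | zero => exact Measure.bind_dirac
  | succ n ih =>
    refine Measure.ext fun B hB ↦ ?_
    calc Qinf.bind (Qkernel (n + 1)) B = ∫⁻ w, Qiter (n + 1) w B ∂Qinf :=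
          Measure.bind_apply hB (Qkernel (n + 1)).aemeasurable
      _ = ∫⁻ w, Qiter n w B ∂Qinf := lintegral_Qiter_succ_apply n hB
      _ = Qinf.bind (Qkernel n) B := (Measure.bind_apply hB (Qkernel n).aemeasurable).symm
      _ = Qinf B := by rw [ih.def]

lemma integral_integral_of_invariant {α E : Type*} {mα : MeasurableSpace α}
    [NormedAddCommGroup E] [NormedSpace ℝ E] {κ : Kernel α α} {μ : Measure α}
    (hκ : κ.Invariant μ) {f : α → E} (hf : Integrable f μ) :
    ∫ w, ∫ y, f y ∂κ w ∂μ = ∫ w, f w ∂μ := by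
  have hcomp : κ.comp (Kernel.const Unit μ) () = μ := by
    rw [← Measure.comp_eq_comp_const_apply, hκ.def]
  calc ∫ w, ∫ y, f y ∂κ w ∂μ = ∫ w, f w ∂(κ.comp (Kernel.const Unit μ) ()) := by
        rw [Kernel.integral_comp (by rwa [hcomp]), Kernel.const_apply]
    _ = ∫ w, f w ∂μ := by rw [hcomp]

lemma integrable_Qinf {f : ℝ → ℝ} (hf : Measurable f) {M : ℝ} (hM : ∀ y ∈ Icc 0 G, |f y| ≤ M) :
    Integrable f Qinf :=
  .of_bound hf.aestronglyMeasurable M (ae_mem_Icc_Qinf.mono hM)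

lemma OscBound.abs_integral_Qiter_sub_integral_Qinf_le {f : ℝ → ℝ} {c : ℝ} (hf : OscBound f c)
    (hfm : Measurable f) (n : ℕ) {w : ℝ} (hw : w ∈ Icc 0 G) :
    |∫ y, f y ∂Qiter n w - ∫ y, f y ∂Qinf| ≤ c * 0.8234 ^ n := by
  have hfi := integrable_Qinf hfm hf.abs_le
  have hFm : StronglyMeasurable fun y ↦ ∫ z, f z ∂Qiter n y :=
    hfm.stronglyMeasurable.integral_kernel (κ := Qkernel n)
  have hF := hf.integral_Qiter hfm n
  have hFi := integrable_Qinf hFm.measurable hF.abs_le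
  have hstat : ∫ y, ∫ z, f z ∂Qiter n y ∂Qinf = ∫ y, f y ∂Qinf :=
    integral_integral_of_invariant (invariant_Qkernel n) hfi
  calc |∫ y, f y ∂Qiter n w - ∫ y, f y ∂Qinf|
      = ‖∫ y, (∫ z, f z ∂Qiter n w - ∫ z, f z ∂Qiter n y) ∂Qinf‖ := by
        rw [integral_sub (integrable_const _) hFi, hstat, integral_const, probReal_univ, one_smul,
          Real.norm_eq_abs]
    _ ≤ c * 0.8234 ^ n * Qinf.real univ :=
        norm_integral_le_of_norm_le_const (ae_mem_Icc_Qinf.mono fun y hy ↦ hF.abs_sub_le hw hy)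
    _ = c * 0.8234 ^ n := by rw [probReal_univ, mul_one]

end Stationarity

end OCF

/-- With `θ = 0.8234`, for every `n ≥ 1`, every `w ∈ W`, every `x ∈ [0,1]` and every
`e ∈ {-1,1}`, `|Fₙʷ(x,e) - F(x,e)| ≤ θⁿ`, where `Fₙʷ(x,e) = ∫_W K_e(x,y) Qⁿ(w,dy)` and
`F(x,e) = ∫_W K_e(x,y) Q∞(dy)`. -/
theorem ocf_Fn_convergence (n : ℕ) (hn : 1 ≤ n) (w : ℝ) (hw : w ∈ Set.Icc (0 : ℝ) G)
    (x : ℝ) (hx : x ∈ Set.Icc (0 : ℝ) 1) (e : ℤ) (he : e = 1 ∨ e = -1) :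
    |(∫ y, K e x y ∂(Qiter n w)) - ∫ y, K e x y ∂Qinf| ≤ 0.8234 ^ n := by
  have hosc : OscBound (K e x) 1 := by
    rcases he with rfl | rfl
    · exact oscBound_K_one hx
    · exact oscBound_K_neg_one hx
  simpa only [one_mul] using hosc.abs_integral_Qiter_sub_integral_Qinf_le (measurable_K e x) n hw
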